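/- Assume (A1)–(A4), with Lipschitz constant E₁ ∈ (0,1), and set a = sup_{t∈ℤ}‖G(t,0,0)‖ and b = sup_{t∈ℤ}‖Q(t,0)‖. Suppose M₀ > 0 satisfies E₁M₀ + b + [(‖A‖+1)(E₁M₀ + b) + 2E₂M₀ + a]·[β₁(1+α₁)/α₁ + β₂/α₂] ≤ M₀, where ‖A‖ = sup_{t∈ℤ}|A(t)|. Then there exists a discrete almost automorphic function x : ℤ → ℝⁿ with sup_{t∈ℤ}‖x(t)‖ ≤ M₀ satisfying, for every t ∈ ℤ, x(t) = Q(t, x(t−g(t))) + ∑_{j=-∞}^{t−1} X(t)P X(j+1)⁻¹ Λ(j,x) − ∑_{j=t}^{∞} X(t)(I−P) X(j+1)⁻¹ Λ(j,x), where Λ(j,x) = (A(j)−I)Q(j, x(j−g(j))) + G(j, x(j), x(j−g(j))); i.e., the neutral system x(t+1) = A(t)x(t) + ΔQ(t, x(t−g(t))) + G(t, x(t), x(t−g(t))) has an almost automorphic solution in the ball Π_{M₀} = {x ∈ 𝒜(ℝⁿ) : ‖x‖_∞ ≤ M₀}. -/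

import Mathlib

open Filter Topology

/-- A function `f : ℤ → 𝕏` is discrete almost automorphic if for every sequence of
integers there exist a subsequence `(k_n)` and a function `f̄` such that
`f(t + k_n) → f̄(t)` and `f̄(t − k_n) → f(t)` pointwise in `t`. -/
def DiscreteAlmostAutomorphic {𝕏 : Type*} [TopologicalSpace 𝕏] (f : ℤ → 𝕏) : Prop :=
  ∀ k' : ℕ → ℤ, ∃ (σ : ℕ → ℕ) (fbar : ℤ → 𝕏), StrictMono σ ∧
    (∀ t : ℤ, Tendsto (fun n => f (t + k' (σ n))) atTop (𝓝 (fbar t))) ∧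
    (∀ t : ℤ, Tendsto (fun n => fbar (t - k' (σ n))) atTop (𝓝 (f t)))

/-- `Λ(j,x) = (A(j) − I) Q(j, x(j − g(j))) + G(j, x(j), x(j − g(j)))`. -/
noncomputable def Lam {n : ℕ} (A : ℤ → (Fin n → ℝ) →L[ℝ] (Fin n → ℝ))
    (g : ℤ → ℤ) (Q : ℤ → (Fin n → ℝ) → Fin n → ℝ)
    (G : ℤ → (Fin n → ℝ) → (Fin n → ℝ) → Fin n → ℝ)
    (x : ℤ → Fin n → ℝ) (j : ℤ) : Fin n → ℝ :=
  (A j - 1) (Q j (x (j - g j))) + G j (x j) (x (j - g j))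

/-!
Subtracting the neutral term, `z = x - Q(·, x(· - g))`, turns the neutral system into the linear
system `z (t + 1) = A t (z t) + Λ t`, so the solutions sought are the fixed points of
`x ↦ Q(·, x(· - g)) + green Λ(x)`, where `green` is Green's operator of the dichotomy. Apart from a
degenerate case in which it fixes `0`, this map is a contraction of the closed ball of almost
automorphic functions, provided that `green` preserves almost automorphy.

The latter comes from a perturbation identity: the difference of two bounded solutions of two linear
systems is Green's operator of the first system applied to the difference of the data. Hence, by
dominated convergence, translates of a bounded solution converge as soon as the translates of
coefficients and forcing do. Comparing two translates of the solution with each other gives a Cauchy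
sequence, hence the limit function; comparing the translated limit with the solution gives the
convergence back. No compactness of the state space is involved.
-/

open scoped BoundedContinuousFunction NNReal

/-- Pointwise convergence of the translates `f (· + k n)` to `fbar`. With `k` replaced by `-k` this
also expresses the backward half of almost automorphy. -/
def TranslatesTo {X : Type*} [TopologicalSpace X] (f : ℤ → X) (k : ℕ → ℤ) (fbar : ℤ → X) : Prop :=
  ∀ t : ℤ, Tendsto (fun n => f (t + k n)) atTop (𝓝 (fbar t))

/-- The two-sided convergence in the definition of almost automorphy: `f` is carried to `fbar` by
the translations `k`, and `fbar` back to `f` by the translations `-k`. -/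
structure IsAutomorphicLimit {X : Type*} [TopologicalSpace X]
    (f : ℤ → X) (k : ℕ → ℤ) (fbar : ℤ → X) : Prop where
  forward : TranslatesTo f k fbar
  backward : TranslatesTo fbar (-k) f

theorem discreteAlmostAutomorphic_iff {X : Type*} [TopologicalSpace X] {f : ℤ → X} :
    DiscreteAlmostAutomorphic f ↔ ∀ k : ℕ → ℤ, ∃ (σ : ℕ → ℕ) (fbar : ℤ → X),
      StrictMono σ ∧ IsAutomorphicLimit f (k ∘ σ) fbar := by
  refine forall_congr' fun k => exists₂_congr fun σ fbar => and_congr_right fun _ => ?_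
  exact ⟨fun h => ⟨h.1, h.2⟩, fun h => ⟨h.forward, h.backward⟩⟩

namespace TranslatesTo

section Topological

variable {X Y : Type*} [TopologicalSpace X] [TopologicalSpace Y]
  {f fbar : ℤ → X} {h hbar : ℤ → Y} {k : ℕ → ℤ}

theorem comp_tendsto (hf : TranslatesTo f k fbar) {σ : ℕ → ℕ} (hσ : Tendsto σ atTop atTop) :
    TranslatesTo f (k ∘ σ) fbar :=
  fun t => (hf t).comp hσ

theorem prodMk (hf : TranslatesTo f k fbar) (hh : TranslatesTo h k hbar) :
    TranslatesTo (fun t => (f t, h t)) k (fun t => (fbar t, hbar t)) :=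
  fun t => (hf t).prodMk_nhds (hh t)

theorem continuous_comp {φ : X → Y} (hφ : Continuous φ) (hf : TranslatesTo f k fbar) :
    TranslatesTo (fun t => φ (f t)) k (fun t => φ (fbar t)) :=
  fun t => (hφ.tendsto _).comp (hf t)

theorem delay {g gbar : ℤ → ℤ} (hf : TranslatesTo f k fbar) (hg : TranslatesTo g k gbar) :
    TranslatesTo (fun t => f (t - g t)) k (fun t => fbar (t - gbar t)) := by
  intro t
  have eventually_eq : ∀ᶠ n in atTop, g (t + k n) = gbar t := by
    simpa only [nhds_discrete, tendsto_pure] using hg t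
  refine (hf (t - gbar t)).congr' ?_
  filter_upwards [eventually_eq] with n hn
  rw [hn, sub_add_eq_add_sub]

end Topological

theorem apply_lipschitz {X Y : Type*} [PseudoMetricSpace X] [PseudoMetricSpace Y]
    {F Fbar : ℤ → X → Y} {f fbar : ℤ → X} {k : ℕ → ℤ} {K : ℝ≥0}
    (hLip : ∀ t, LipschitzWith K (F t))
    (hF : ∀ u, TranslatesTo (fun t => F t u) k (fun t => Fbar t u))
    (hf : TranslatesTo f k fbar) :
    TranslatesTo (fun t => F t (f t)) k (fun t => Fbar t (fbar t)) := by
  intro t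
  have hdist : Tendsto (fun n => K * dist (fbar t) (f (t + k n))) atTop (𝓝 0) := by
    simpa only [dist_self, mul_zero] using
      ((tendsto_const_nhds (x := fbar t)).dist (hf t)).const_mul (K : ℝ)
  exact (hF (fbar t) t).congr_dist <|
    squeeze_zero (fun _ => dist_nonneg) (fun _ => (hLip _).dist_le_mul _ _) hdist

theorem lipschitzWith {X Y : Type*} [PseudoMetricSpace X] [PseudoMetricSpace Y]
    {F Fbar : ℤ → X → Y} {k : ℕ → ℤ} {K : ℝ≥0} (hLip : ∀ t, LipschitzWith K (F t))
    (hF : ∀ u, TranslatesTo (fun t => F t u) k (fun t => Fbar t u)) (t : ℤ) :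
    LipschitzWith K (Fbar t) :=
  LipschitzWith.of_dist_le_mul fun u v =>
    le_of_tendsto' ((hF u t).dist (hF v t)) fun _ => (hLip _).dist_le_mul u v

theorem of_tendstoUniformly {X ι : Type*} [UniformSpace X] {l : Filter ι} [l.NeBot]
    {F Fbar : ι → ℤ → X} {f fbar : ℤ → X} {k : ℕ → ℤ}
    (hF : ∀ i, TranslatesTo (F i) k (Fbar i)) (hf : TendstoUniformly F f l)
    (hfbar : TendstoUniformly Fbar fbar l) : TranslatesTo f k fbar :=
  fun t => (hf.comp fun n => t + k n).tendsto_of_eventually_tendsto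
    (Eventually.of_forall fun i => hF i t) (hfbar.tendsto_at t)

theorem tendsto_sub {E : Type*} [AddGroup E] [TopologicalSpace E] [ContinuousSub E]
    {f fbar : ℤ → E} {k : ℕ → ℤ} (hf : TranslatesTo f k fbar) (t : ℤ) :
    Tendsto (fun p : ℕ × ℕ => f (t + k p.1) - f (t + k p.2)) atTop (𝓝 0) := by
  rw [← prod_atTop_atTop_eq, ← sub_self (fbar t)]
  exact ((hf t).comp tendsto_fst).sub ((hf t).comp tendsto_snd)

end TranslatesTo

namespace IsAutomorphicLimit

variable {X Y : Type*} [TopologicalSpace X] [TopologicalSpace Y]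
  {f fbar : ℤ → X} {h hbar : ℤ → Y} {k : ℕ → ℤ}

theorem comp_tendsto (hf : IsAutomorphicLimit f k fbar) {σ : ℕ → ℕ}
    (hσ : Tendsto σ atTop atTop) : IsAutomorphicLimit f (k ∘ σ) fbar :=
  ⟨hf.forward.comp_tendsto hσ, hf.backward.comp_tendsto hσ⟩

theorem prodMk (hf : IsAutomorphicLimit f k fbar) (hh : IsAutomorphicLimit h k hbar) :
    IsAutomorphicLimit (fun t => (f t, h t)) k (fun t => (fbar t, hbar t)) :=
  ⟨hf.forward.prodMk hh.forward, hf.backward.prodMk hh.backward⟩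

end IsAutomorphicLimit

namespace DiscreteAlmostAutomorphic

section Topological

variable {X Y : Type*} [TopologicalSpace X] [TopologicalSpace Y] {f : ℤ → X} {h : ℤ → Y}

theorem const (c : X) : DiscreteAlmostAutomorphic fun _ : ℤ => c :=
  fun _ => ⟨id, fun _ => c, strictMono_id, fun _ => tendsto_const_nhds, fun _ => tendsto_const_nhds⟩

theorem exists_common_limit (hf : DiscreteAlmostAutomorphic f) (hh : DiscreteAlmostAutomorphic h)
    (k : ℕ → ℤ) : ∃ (σ : ℕ → ℕ) (fbar : ℤ → X) (hbar : ℤ → Y), StrictMono σ ∧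
      IsAutomorphicLimit f (k ∘ σ) fbar ∧ IsAutomorphicLimit h (k ∘ σ) hbar := by
  obtain ⟨σ, fbar, hσ, hfbar⟩ := discreteAlmostAutomorphic_iff.1 hf k
  obtain ⟨τ, hbar, hτ, hhbar⟩ := discreteAlmostAutomorphic_iff.1 hh (k ∘ σ)
  exact ⟨σ ∘ τ, fbar, hbar, hσ.comp hτ, hfbar.comp_tendsto hτ.tendsto_atTop, hhbar⟩

theorem prodMk (hf : DiscreteAlmostAutomorphic f) (hh : DiscreteAlmostAutomorphic h) :
    DiscreteAlmostAutomorphic fun t => (f t, h t) := by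
  refine discreteAlmostAutomorphic_iff.2 fun k => ?_
  obtain ⟨σ, fbar, hbar, hσ, hfbar, hhbar⟩ := hf.exists_common_limit hh k
  exact ⟨σ, _, hσ, hfbar.prodMk hhbar⟩

theorem continuous_comp {φ : X → Y} (hφ : Continuous φ) (hf : DiscreteAlmostAutomorphic f) :
    DiscreteAlmostAutomorphic fun t => φ (f t) := by
  refine discreteAlmostAutomorphic_iff.2 fun k => ?_
  obtain ⟨σ, fbar, hσ, hfbar⟩ := discreteAlmostAutomorphic_iff.1 hf k
  exact ⟨σ, _, hσ, hfbar.forward.continuous_comp hφ, hfbar.backward.continuous_comp hφ⟩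

theorem add {E : Type*} [TopologicalSpace E] [Add E] [ContinuousAdd E] {f g : ℤ → E}
    (hf : DiscreteAlmostAutomorphic f) (hg : DiscreteAlmostAutomorphic g) :
    DiscreteAlmostAutomorphic fun t => f t + g t :=
  (hf.prodMk hg).continuous_comp continuous_add

theorem delay {g : ℤ → ℤ} (hf : DiscreteAlmostAutomorphic f) (hg : DiscreteAlmostAutomorphic g) :
    DiscreteAlmostAutomorphic fun t => f (t - g t) := by
  refine discreteAlmostAutomorphic_iff.2 fun k => ?_
  obtain ⟨σ, fbar, gbar, hσ, hfbar, hgbar⟩ := hf.exists_common_limit hg k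
  exact ⟨σ, _, hσ, hfbar.forward.delay hgbar.forward, hfbar.backward.delay hgbar.backward⟩

theorem isAutomorphicLimit [T2Space X] {fbar : ℤ → X} {k : ℕ → ℤ}
    (hf : DiscreteAlmostAutomorphic f) (hfbar : TranslatesTo f k fbar) :
    IsAutomorphicLimit f k fbar := by
  refine ⟨hfbar, fun t => tendsto_of_subseq_tendsto fun ns hns => ?_⟩
  obtain ⟨σ, flim, hσ, hlim⟩ := discreteAlmostAutomorphic_iff.1 hf (k ∘ ns)
  have hlim_eq : flim = fbar := funext fun s =>
    tendsto_nhds_unique (hlim.forward s) (hfbar.comp_tendsto (hns.comp hσ.tendsto_atTop) s)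
  exact ⟨σ, hlim_eq ▸ hlim.backward t⟩

end Topological

section Metric

theorem isCompact_closure_range {X : Type*} [PseudoMetricSpace X] {f : ℤ → X}
    (hf : DiscreteAlmostAutomorphic f) : IsCompact (closure (Set.range f)) := by
  refine IsSeqCompact.isCompact fun y hy => ?_
  have approx (n : ℕ) : ∃ s, dist (y n) (f s) < 1 / ((n : ℝ) + 1) := by
    simpa only [Set.exists_range_iff] using
      Metric.mem_closure_iff.1 (hy n) _ Nat.one_div_pos_of_nat
  choose s hs using approx
  obtain ⟨σ, fbar, hσ, hfbar⟩ := discreteAlmostAutomorphic_iff.1 hf s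
  have hfσ : Tendsto (fun n => f (s (σ n))) atTop (𝓝 (fbar 0)) := by
    simpa only [zero_add, Function.comp_apply] using hfbar.forward 0
  refine ⟨fbar 0, mem_closure_of_tendsto hfσ (Eventually.of_forall fun n => Set.mem_range_self _),
    σ, hσ, hfσ.congr_dist ?_⟩
  refine squeeze_zero (fun _ => dist_nonneg) (fun n => ?_)
    (tendsto_one_div_add_atTop_nhds_zero_nat.comp hσ.tendsto_atTop)
  exact (dist_comm _ _).trans_le (hs (σ n)).le

theorem exists_norm_le {V : Type*} [SeminormedAddCommGroup V] {f : ℤ → V}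
    (hf : DiscreteAlmostAutomorphic f) : ∃ C, ∀ t, ‖f t‖ ≤ C := by
  obtain ⟨C, hC⟩ := hf.isCompact_closure_range.isBounded.exists_norm_le
  exact ⟨C, fun t => hC _ (subset_closure (Set.mem_range_self t))⟩

theorem norm_le_iSup {V : Type*} [SeminormedAddCommGroup V] {f : ℤ → V}
    (hf : DiscreteAlmostAutomorphic f) (t : ℤ) : ‖f t‖ ≤ ⨆ s, ‖f s‖ := by
  obtain ⟨C, hC⟩ := hf.exists_norm_le
  exact le_ciSup ⟨C, Set.forall_mem_range.2 hC⟩ t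

theorem pi {ι : Type*} [Countable ι] {X : ι → Type*} [∀ i, MetricSpace (X i)]
    {f : ∀ i, ℤ → X i} (hf : ∀ i, DiscreteAlmostAutomorphic (f i)) :
    DiscreteAlmostAutomorphic fun t i => f i t := by
  refine discreteAlmostAutomorphic_iff.2 fun k => ?_
  have hcompact : IsCompact (Set.univ.pi fun p : ℤ × ι => closure (Set.range (f p.2))) :=
    isCompact_univ_pi fun p => (hf p.2).isCompact_closure_range
  obtain ⟨fbar, -, σ, hσ, hlim⟩ := hcompact.isSeqCompact (x := fun n p => f p.2 (p.1 + k n))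
    fun n p _ => subset_closure (Set.mem_range_self _)
  have hforward (i : ι) : TranslatesTo (f i) (k ∘ σ) fun t => fbar (t, i) :=
    fun t => tendsto_pi_nhds.1 hlim (t, i)
  exact ⟨σ, fun t i => fbar (t, i), hσ, fun t => tendsto_pi_nhds.2 fun i => hforward i t,
    fun t => tendsto_pi_nhds.2 fun i => ((hf i).isAutomorphicLimit (hforward i)).backward t⟩

-- Only the countably many parameters `f t` and `fbar t` matter, so that finding a common
-- subsequence for all of them needs no separability of `X`.
theorem apply_lipschitz {X Y : Type*} [PseudoMetricSpace X] [MetricSpace Y] {F : ℤ → X → Y}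
    {f : ℤ → X} {K : ℝ≥0} (hLip : ∀ t, LipschitzWith K (F t))
    (hF : ∀ u, DiscreteAlmostAutomorphic fun t => F t u) (hf : DiscreteAlmostAutomorphic f) :
    DiscreteAlmostAutomorphic fun t => F t (f t) := by
  refine discreteAlmostAutomorphic_iff.2 fun k => ?_
  obtain ⟨σ, fbar, hσ, hfbar⟩ := discreteAlmostAutomorphic_iff.1 hf k
  let S : Set X := Set.range f ∪ Set.range fbar
  have : Countable S := ((Set.countable_range f).union (Set.countable_range fbar)).to_subtype
  let fS (t : ℤ) : S := ⟨f t, .inl ⟨t, rfl⟩⟩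
  let fbarS (t : ℤ) : S := ⟨fbar t, .inr ⟨t, rfl⟩⟩
  obtain ⟨τ, Fbar, hτ, hFbar⟩ := discreteAlmostAutomorphic_iff.1
    (DiscreteAlmostAutomorphic.pi fun u : S => hF u) (k ∘ σ)
  have hfS : IsAutomorphicLimit fS ((k ∘ σ) ∘ τ) fbarS :=
    have hfbarτ := hfbar.comp_tendsto hτ.tendsto_atTop
    ⟨fun t => tendsto_subtype_rng.2 (hfbarτ.forward t),
      fun t => tendsto_subtype_rng.2 (hfbarτ.backward t)⟩
  have hLipS (t : ℤ) : LipschitzWith K fun u : S => F t u := fun u v => hLip t u v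
  have hforward (u : S) : TranslatesTo (fun t => F t u) ((k ∘ σ) ∘ τ) fun t => Fbar t u :=
    hFbar.forward.continuous_comp (continuous_apply u)
  have hbackward (u : S) : TranslatesTo (fun t => Fbar t u) (-((k ∘ σ) ∘ τ)) fun t => F t u :=
    hFbar.backward.continuous_comp (continuous_apply u)
  exact ⟨σ ∘ τ, fun t => Fbar t (fbarS t), hσ.comp hτ,
    TranslatesTo.apply_lipschitz hLipS hforward hfS.forward,
    TranslatesTo.apply_lipschitz (TranslatesTo.lipschitzWith hLipS hforward) hbackward
      hfS.backward⟩

theorem of_tendstoUniformly {X : Type*} [MetricSpace X] [CompleteSpace X] {F : ℕ → ℤ → X}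
    {f : ℤ → X} (hF : ∀ m, DiscreteAlmostAutomorphic (F m)) (hf : TendstoUniformly F f atTop) :
    DiscreteAlmostAutomorphic f := by
  refine discreteAlmostAutomorphic_iff.2 fun k => ?_
  obtain ⟨σ, Fbar, hσ, hFbar⟩ := discreteAlmostAutomorphic_iff.1
    (DiscreteAlmostAutomorphic.pi hF) k
  have hforward (m : ℕ) : TranslatesTo (F m) (k ∘ σ) fun t => Fbar t m :=
    hFbar.forward.continuous_comp (continuous_apply m)
  have hbackward (m : ℕ) : TranslatesTo (fun t => Fbar t m) (-(k ∘ σ)) (F m) :=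
    hFbar.backward.continuous_comp (continuous_apply m)
  have hcauchy : UniformCauchySeqOn (fun m t => Fbar t m) atTop Set.univ := by
    refine Metric.uniformCauchySeqOn_iff.2 fun ε hε => ?_
    obtain ⟨N, hN⟩ := Metric.uniformCauchySeqOn_iff.1
      (tendstoUniformlyOn_univ.2 hf).uniformCauchySeqOn (ε / 2) (half_pos hε)
    refine ⟨N, fun m hm n hn t _ => lt_of_le_of_lt ?_ (half_lt_self hε)⟩
    exact le_of_tendsto' ((hforward m t).dist (hforward n t)) fun i =>
      (hN m hm n hn _ (Set.mem_univ _)).le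
  choose fbar hfbar using fun t =>
    cauchySeq_tendsto_of_complete (hcauchy.cauchySeq (Set.mem_univ t))
  have hunif : TendstoUniformly (fun m t => Fbar t m) fbar atTop :=
    tendstoUniformlyOn_univ.1 (hcauchy.tendstoUniformlyOn_of_tendsto fun t _ => hfbar t)
  exact ⟨σ, fbar, hσ, TranslatesTo.of_tendstoUniformly hforward hf hunif,
    TranslatesTo.of_tendstoUniformly hbackward hunif hf⟩

end Metric

end DiscreteAlmostAutomorphic

/-- Exponential dichotomy of the homogeneous system `x (t + 1) = A t (x t)` with fundamental
solution `X`, whose pointwise inverse is `Xinv`. -/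
structure ExponentialDichotomy {V : Type*} [NormedAddCommGroup V] [NormedSpace ℝ V]
    (A X Xinv : ℤ → V →L[ℝ] V) (P : V →L[ℝ] V) (α₁ α₂ β₁ β₂ : ℝ) : Prop where
  fundamental : ∀ t, X (t + 1) = A t * X t
  mul_inv : ∀ t, X t * Xinv t = 1
  inv_mul : ∀ t, Xinv t * X t = 1
  projection : P * P = P
  α₁_pos : 0 < α₁
  α₂_pos : 0 < α₂
  β₁_pos : 0 < β₁
  β₂_pos : 0 < β₂
  norm_stable_le : ∀ s t, s ≤ t → ‖X t * P * Xinv s‖ ≤ β₁ * (1 + α₁) ^ (s - t)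
  norm_unstable_le : ∀ s t, t ≤ s → ‖X t * (1 - P) * Xinv s‖ ≤ β₂ * (1 + α₂) ^ (t - s)

section Green

variable {V : Type*} [NormedAddCommGroup V] [NormedSpace ℝ V]

/-- `∑_{j ≤ t - 1} X t P (X (j + 1))⁻¹ h j`, reindexed by `j = t - 1 - m`. -/
noncomputable def pastSum (X Xinv : ℤ → V →L[ℝ] V) (P : V →L[ℝ] V) (h : ℤ → V) (t : ℤ) : V :=
  ∑' m : ℕ, (X t * P * Xinv (t - (m : ℤ))) (h (t - 1 - (m : ℤ)))

/-- `∑_{j ≥ t} X t R (X (j + 1))⁻¹ h j`, reindexed by `j = t + m`. -/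
noncomputable def futureSum (X Xinv : ℤ → V →L[ℝ] V) (R : V →L[ℝ] V) (h : ℤ → V) (t : ℤ) : V :=
  ∑' m : ℕ, (X t * R * Xinv (t + (m : ℤ) + 1)) (h (t + (m : ℤ)))

/-- Green's operator of a dichotomy: it sends a bounded forcing `h` to the bounded solution of
`z (t + 1) = A t (z t) + h t`. -/
noncomputable def green (X Xinv : ℤ → V →L[ℝ] V) (P : V →L[ℝ] V) (h : ℤ → V) (t : ℤ) : V :=
  pastSum X Xinv P h t - futureSum X Xinv (1 - P) h t

theorem hasSum_inv_one_add_pow {α : ℝ} (hα : 0 < α) :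
    HasSum (fun m : ℕ => (1 + α)⁻¹ ^ m) ((1 + α) / α) := by
  have hsum : (1 - (1 + α)⁻¹)⁻¹ = (1 + α) / α := by
    rw [inv_eq_iff_eq_inv, inv_div]
    field_simp
    ring
  exact hsum ▸ hasSum_geometric_of_lt_one (by positivity) (inv_lt_one_of_one_lt₀ (by linarith))

theorem hasSum_inv_one_add_pow_succ {α : ℝ} (hα : 0 < α) :
    HasSum (fun m : ℕ => (1 + α)⁻¹ ^ (m + 1)) α⁻¹ := by
  have hsum : (1 + α) / α * (1 + α)⁻¹ = α⁻¹ := by field_simp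
  simpa only [pow_succ, hsum] using (hasSum_inv_one_add_pow hα).mul_right (1 + α)⁻¹

namespace ExponentialDichotomy

variable {A X Xinv : ℤ → V →L[ℝ] V} {P : V →L[ℝ] V} {α₁ α₂ β₁ β₂ : ℝ} {h : ℤ → V} {C : ℝ}

theorem norm_stable_apply_le (D : ExponentialDichotomy A X Xinv P α₁ α₂ β₁ β₂) (t : ℤ) (m : ℕ)
    (v : V) : ‖(X t * P * Xinv (t - (m : ℤ))) v‖ ≤ β₁ * (1 + α₁)⁻¹ ^ m * ‖v‖ := by
  refine ContinuousLinearMap.le_of_opNorm_le _ ?_ v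
  simpa only [sub_sub_cancel_left, zpow_neg, zpow_natCast, inv_pow] using
    D.norm_stable_le (t - m) t (by lia)

theorem norm_unstable_apply_le (D : ExponentialDichotomy A X Xinv P α₁ α₂ β₁ β₂) (t : ℤ) (m : ℕ)
    (v : V) : ‖(X t * (1 - P) * Xinv (t + (m : ℤ))) v‖ ≤ β₂ * (1 + α₂)⁻¹ ^ m * ‖v‖ := by
  refine ContinuousLinearMap.le_of_opNorm_le _ ?_ v
  simpa only [sub_add_cancel_left, zpow_neg, zpow_natCast, inv_pow] using
    D.norm_unstable_le (t + m) t (by lia)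

theorem norm_pastSummand_le (D : ExponentialDichotomy A X Xinv P α₁ α₂ β₁ β₂)
    (hC : ∀ t, ‖h t‖ ≤ C) (t : ℤ) (m : ℕ) :
    ‖(X t * P * Xinv (t - (m : ℤ))) (h (t - 1 - (m : ℤ)))‖ ≤ β₁ * (1 + α₁)⁻¹ ^ m * C := by
  have := D.α₁_pos
  have := D.β₁_pos
  exact (D.norm_stable_apply_le t m _).trans (by gcongr; exact hC _)

theorem norm_futureSummand_le (D : ExponentialDichotomy A X Xinv P α₁ α₂ β₁ β₂)
    (hC : ∀ t, ‖h t‖ ≤ C) (t : ℤ) (m : ℕ) :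
    ‖(X t * (1 - P) * Xinv (t + (m : ℤ) + 1)) (h (t + (m : ℤ)))‖ ≤
      β₂ * (1 + α₂)⁻¹ ^ (m + 1) * C := by
  have := D.α₂_pos
  have := D.β₂_pos
  have hle := D.norm_unstable_apply_le t (m + 1) (h (t + m))
  rw [Nat.cast_add_one, ← add_assoc] at hle
  exact hle.trans (by gcongr; exact hC _)

theorem hasSum_pastBound (D : ExponentialDichotomy A X Xinv P α₁ α₂ β₁ β₂) (C : ℝ) :
    HasSum (fun m : ℕ => β₁ * (1 + α₁)⁻¹ ^ m * C) (β₁ * (1 + α₁) / α₁ * C) := by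
  rw [mul_div_assoc]
  exact ((hasSum_inv_one_add_pow D.α₁_pos).mul_left β₁).mul_right C

theorem hasSum_futureBound (D : ExponentialDichotomy A X Xinv P α₁ α₂ β₁ β₂) (C : ℝ) :
    HasSum (fun m : ℕ => β₂ * (1 + α₂)⁻¹ ^ (m + 1) * C) (β₂ / α₂ * C) :=
  ((hasSum_inv_one_add_pow_succ D.α₂_pos).mul_left β₂).mul_right C

theorem norm_green_le (D : ExponentialDichotomy A X Xinv P α₁ α₂ β₁ β₂) (hC : ∀ t, ‖h t‖ ≤ C)
    (t : ℤ) : ‖green X Xinv P h t‖ ≤ (β₁ * (1 + α₁) / α₁ + β₂ / α₂) * C := by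
  rw [add_mul]
  exact norm_sub_le_of_le
    (tsum_of_norm_bounded (D.hasSum_pastBound C) (D.norm_pastSummand_le hC t))
    (tsum_of_norm_bounded (D.hasSum_futureBound C) (D.norm_futureSummand_le hC t))

theorem apply_inv_apply_of_solution (D : ExponentialDichotomy A X Xinv P α₁ α₂ β₁ β₂) {z : ℤ → V}
    (hz : ∀ t, z (t + 1) = A t (z t)) (t s : ℤ) : X t (Xinv s (z s)) = z t := by
  have hmul (t : ℤ) (v : V) : X t (Xinv t v) = v := DFunLike.congr_fun (D.mul_inv t) v
  have hinv (t : ℤ) (v : V) : Xinv t (X t v) = v := DFunLike.congr_fun (D.inv_mul t) v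
  have hperiodic : Function.Periodic (fun t => Xinv t (z t)) 1 := fun t =>
    calc Xinv (t + 1) (z (t + 1)) = Xinv (t + 1) (A t (X t (Xinv t (z t)))) := by rw [hz, hmul]
      _ = Xinv (t + 1) (X (t + 1) (Xinv t (z t))) := by rw [D.fundamental t]; rfl
      _ = Xinv t (z t) := hinv _ _
  have hconst (t : ℤ) : Xinv t (z t) = Xinv 0 (z 0) := by
    simpa only [Int.cast_id, mul_one] using hperiodic.int_mul_eq t
  rw [hconst s, ← hconst t, hmul]

theorem eq_zero_of_bounded_solution (D : ExponentialDichotomy A X Xinv P α₁ α₂ β₁ β₂) {z : ℤ → V}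
    (hC : ∀ t, ‖z t‖ ≤ C) (hz : ∀ t, z (t + 1) = A t (z t)) (t : ℤ) : z t = 0 := by
  have := D.α₁_pos
  have := D.α₂_pos
  have := D.β₁_pos
  have := D.β₂_pos
  have hsplit (m : ℕ) : z t = (X t * P * Xinv (t - (m : ℤ))) (z (t - m)) +
      (X t * (1 - P) * Xinv (t + (m : ℤ))) (z (t + m)) := by
    have hcoord (s : ℤ) : Xinv s (z s) = Xinv t (z t) := by
      rw [← D.apply_inv_apply_of_solution hz s t]
      exact DFunLike.congr_fun (D.inv_mul s) _
    calc z t = X t (P (Xinv t (z t)) + (Xinv t (z t) - P (Xinv t (z t)))) := by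
          rw [add_sub_cancel, D.apply_inv_apply_of_solution hz]
      _ = X t (P (Xinv (t - m) (z (t - m)))) + X t ((1 - P) (Xinv (t + m) (z (t + m)))) := by
          rw [map_add, hcoord (t - m), hcoord (t + m)]; rfl
  have hbound (m : ℕ) : ‖z t‖ ≤ β₁ * (1 + α₁)⁻¹ ^ m * C + β₂ * (1 + α₂)⁻¹ ^ m * C := by
    rw [hsplit m]
    exact norm_add_le_of_le
      ((D.norm_stable_apply_le t m _).trans (by gcongr; exact hC _))
      ((D.norm_unstable_apply_le t m _).trans (by gcongr; exact hC _))
  have hlim (α β : ℝ) (hα : 0 < α) :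
      Tendsto (fun m : ℕ => β * (1 + α)⁻¹ ^ m * C) atTop (𝓝 0) :=
    (((hasSum_inv_one_add_pow hα).summable.mul_left β).mul_right C).tendsto_atTop_zero
  have hlim_add := (hlim α₁ β₁ D.α₁_pos).add (hlim α₂ β₂ D.α₂_pos)
  rw [add_zero] at hlim_add
  exact norm_le_zero_iff.1 (ge_of_tendsto' hlim_add hbound)

variable [CompleteSpace V]

theorem summable_past (D : ExponentialDichotomy A X Xinv P α₁ α₂ β₁ β₂)
    (hC : ∀ t, ‖h t‖ ≤ C) (t : ℤ) :
    Summable fun m : ℕ => (X t * P * Xinv (t - (m : ℤ))) (h (t - 1 - (m : ℤ))) :=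
  .of_norm_bounded (D.hasSum_pastBound C).summable (D.norm_pastSummand_le hC t)

theorem summable_future (D : ExponentialDichotomy A X Xinv P α₁ α₂ β₁ β₂)
    (hC : ∀ t, ‖h t‖ ≤ C) (t : ℤ) :
    Summable fun m : ℕ => (X t * (1 - P) * Xinv (t + (m : ℤ) + 1)) (h (t + (m : ℤ))) :=
  .of_norm_bounded (D.hasSum_futureBound C).summable (D.norm_futureSummand_le hC t)

theorem green_sub (D : ExponentialDichotomy A X Xinv P α₁ α₂ β₁ β₂) {h' : ℤ → V} {C' : ℝ}
    (hC : ∀ t, ‖h t‖ ≤ C) (hC' : ∀ t, ‖h' t‖ ≤ C') (t : ℤ) :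
    green X Xinv P (fun t => h t - h' t) t = green X Xinv P h t - green X Xinv P h' t := by
  simp only [green, pastSum, futureSum, map_sub,
    (D.summable_past hC t).tsum_sub (D.summable_past hC' t),
    (D.summable_future hC t).tsum_sub (D.summable_future hC' t)]
  abel

theorem pastSum_add_one (D : ExponentialDichotomy A X Xinv P α₁ α₂ β₁ β₂)
    (hC : ∀ t, ‖h t‖ ≤ C) (t : ℤ) : pastSum X Xinv P h (t + 1) =
      (X (t + 1) * P * Xinv (t + 1)) (h t) + A t (pastSum X Xinv P h t) := by
  rw [pastSum, (D.summable_past hC (t + 1)).tsum_eq_zero_add, pastSum,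
    (A t).map_tsum (D.summable_past hC t)]
  congr 1
  · simp only [Nat.cast_zero, sub_zero, add_sub_cancel_right]
  · refine tsum_congr fun m => ?_
    rw [show t + 1 - ((m + 1 : ℕ) : ℤ) = t - m by lia,
      show t + 1 - 1 - ((m + 1 : ℕ) : ℤ) = t - 1 - m by lia, D.fundamental t]
    rfl

theorem apply_futureSum (D : ExponentialDichotomy A X Xinv P α₁ α₂ β₁ β₂)
    (hC : ∀ t, ‖h t‖ ≤ C) (t : ℤ) : A t (futureSum X Xinv (1 - P) h t) =
      (X (t + 1) * (1 - P) * Xinv (t + 1)) (h t) + futureSum X Xinv (1 - P) h (t + 1) := by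
  rw [futureSum, (A t).map_tsum (D.summable_future hC t),
    ((D.summable_future hC t).mapL (A t)).tsum_eq_zero_add, D.fundamental t]
  congr 1
  · simp only [Nat.cast_zero, add_zero]
    rfl
  · refine tsum_congr fun m => ?_
    rw [show t + ((m + 1 : ℕ) : ℤ) = t + 1 + m by lia, D.fundamental t]
    rfl

theorem green_add_one (D : ExponentialDichotomy A X Xinv P α₁ α₂ β₁ β₂) (hC : ∀ t, ‖h t‖ ≤ C)
    (t : ℤ) : green X Xinv P h (t + 1) = A t (green X Xinv P h t) + h t := by
  have hresolution : (X (t + 1) * P * Xinv (t + 1)) (h t) +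
      (X (t + 1) * (1 - P) * Xinv (t + 1)) (h t) = h t := by
    rw [← add_apply, ← add_mul, ← mul_add, add_sub_cancel, mul_one, D.mul_inv]
    rfl
  calc green X Xinv P h (t + 1)
    _ = A t (pastSum X Xinv P h t) - A t (futureSum X Xinv (1 - P) h t) +
        ((X (t + 1) * P * Xinv (t + 1)) (h t) +
          (X (t + 1) * (1 - P) * Xinv (t + 1)) (h t)) := by
        rw [green, D.pastSum_add_one hC, D.apply_futureSum hC]
        abel
    _ = A t (green X Xinv P h t) + h t := by rw [hresolution, green, map_sub]

theorem eq_green_of_bounded_solution (D : ExponentialDichotomy A X Xinv P α₁ α₂ β₁ β₂) {z : ℤ → V}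
    {C' : ℝ} (hC : ∀ t, ‖h t‖ ≤ C) (hC' : ∀ t, ‖z t‖ ≤ C')
    (hz : ∀ t, z (t + 1) = A t (z t) + h t) (t : ℤ) : z t = green X Xinv P h t := by
  refine sub_eq_zero.1 <| D.eq_zero_of_bounded_solution
    (z := fun t => z t - green X Xinv P h t)
    (fun t => norm_sub_le_of_le (hC' t) (D.norm_green_le hC t)) (fun t => ?_) t
  rw [hz, D.green_add_one hC, map_sub]
  abel

theorem tendsto_green_zero (D : ExponentialDichotomy A X Xinv P α₁ α₂ β₁ β₂) {ι : Type*}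
    {l : Filter ι} {h : ι → ℤ → V} {s : ι → ℤ} (hC : ∀ i t, ‖h i t‖ ≤ C)
    (hs : ∀ t, Tendsto (fun i => h i (s i + t)) l (𝓝 0)) :
    Tendsto (fun i => green X Xinv P (h i) (s i)) l (𝓝 0) := by
  have hpast : Tendsto (fun i => pastSum X Xinv P (h i) (s i)) l (𝓝 (∑' _ : ℕ, (0 : V))) := by
    refine tendsto_tsum_of_dominated_convergence (D.hasSum_pastBound C).summable (fun m => ?_)
      (Eventually.of_forall fun i => D.norm_pastSummand_le (hC i) (s i))
    refine squeeze_zero_norm (fun i => D.norm_stable_apply_le (s i) m _) ?_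
    simpa only [norm_zero, mul_zero, sub_sub, ← sub_eq_add_neg] using
      (hs (-(1 + m))).norm.const_mul (β₁ * (1 + α₁)⁻¹ ^ m)
  have hfuture :
      Tendsto (fun i => futureSum X Xinv (1 - P) (h i) (s i)) l (𝓝 (∑' _ : ℕ, (0 : V))) := by
    refine tendsto_tsum_of_dominated_convergence (D.hasSum_futureBound C).summable (fun m => ?_)
      (Eventually.of_forall fun i => D.norm_futureSummand_le (hC i) (s i))
    refine squeeze_zero_norm (fun i => ?_) (a := fun i =>
      β₂ * (1 + α₂)⁻¹ ^ (m + 1) * ‖h i (s i + m)‖) ?_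
    · simpa only [Nat.cast_add_one, ← add_assoc] using D.norm_unstable_apply_le (s i) (m + 1) _
    · simpa only [norm_zero, mul_zero] using (hs m).norm.const_mul (β₂ * (1 + α₂)⁻¹ ^ (m + 1))
  simpa only [green, tsum_zero, sub_zero] using hpast.sub hfuture

end ExponentialDichotomy

end Green

section BoundedSolutions

variable {V : Type*} [NormedAddCommGroup V] [NormedSpace ℝ V]

/-- `z` solves `z (t + 1) = A t (z t) + h t` on all of `ℤ`, and `C` bounds `A`, `h` and `z`. -/
structure IsBoundedSolution (C : ℝ) (A : ℤ → V →L[ℝ] V) (h z : ℤ → V) : Prop where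
  norm_coeff_le : ∀ t, ‖A t‖ ≤ C
  norm_forcing_le : ∀ t, ‖h t‖ ≤ C
  norm_le : ∀ t, ‖z t‖ ≤ C
  add_one : ∀ t, z (t + 1) = A t (z t) + h t

namespace IsBoundedSolution

variable {C : ℝ} {A Abar B : ℤ → V →L[ℝ] V} {h hbar f z zbar w : ℤ → V} {k : ℕ → ℤ}

theorem shift (S : IsBoundedSolution C A h z) (r : ℤ) :
    IsBoundedSolution C (fun t => A (t + r)) (fun t => h (t + r)) (fun t => z (t + r)) where
  norm_coeff_le _ := S.norm_coeff_le _
  norm_forcing_le _ := S.norm_forcing_le _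
  norm_le _ := S.norm_le _
  add_one t := by rw [add_right_comm, S.add_one]

theorem of_translatesTo (S : IsBoundedSolution C A h z) (hA : TranslatesTo A k Abar)
    (hh : TranslatesTo h k hbar) (hz : TranslatesTo z k zbar) :
    IsBoundedSolution C Abar hbar zbar where
  norm_coeff_le t := le_of_tendsto' (hA t).norm fun _ => S.norm_coeff_le _
  norm_forcing_le t := le_of_tendsto' (hh t).norm fun _ => S.norm_forcing_le _
  norm_le t := le_of_tendsto' (hz t).norm fun _ => S.norm_le _
  add_one t := by
    have happly : TranslatesTo (fun t => A t (z t)) k fun t => Abar t (zbar t) :=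
      (hA.prodMk hz).continuous_comp isBoundedBilinearMap_apply.continuous
    refine tendsto_nhds_unique (hz (t + 1)) (((happly t).add (hh t)).congr fun n => ?_)
    rw [add_right_comm, S.add_one]

theorem norm_perturbation_le (S : IsBoundedSolution C A h z) (S' : IsBoundedSolution C B f w)
    (t : ℤ) : ‖(A t - B t) (w t) + (h t - f t)‖ ≤ (C + C) * C + (C + C) :=
  norm_add_le_of_le
    (ContinuousLinearMap.le_of_opNorm_le_of_le _
      (norm_sub_le_of_le (S.norm_coeff_le t) (S'.norm_coeff_le t)) (S'.norm_le t))
    (norm_sub_le_of_le (S.norm_forcing_le t) (S'.norm_forcing_le t))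

end IsBoundedSolution

namespace ExponentialDichotomy

variable [CompleteSpace V] {A Abar X Xinv : ℤ → V →L[ℝ] V} {P : V →L[ℝ] V} {α₁ α₂ β₁ β₂ C : ℝ}
  {h hbar z zbar : ℤ → V} {k : ℕ → ℤ}

theorem sub_eq_green (D : ExponentialDichotomy A X Xinv P α₁ α₂ β₁ β₂)
    (S : IsBoundedSolution C A h z) {B : ℤ → V →L[ℝ] V} {f w : ℤ → V}
    (S' : IsBoundedSolution C B f w) (t : ℤ) :
    z t - w t = green X Xinv P (fun t => (A t - B t) (w t) + (h t - f t)) t := by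
  refine D.eq_green_of_bounded_solution (z := fun t => z t - w t) (S.norm_perturbation_le S')
    (fun t => norm_sub_le_of_le (S.norm_le t) (S'.norm_le t)) (fun t => ?_) t
  rw [S.add_one, S'.add_one, map_sub, sub_apply]
  abel

theorem tendsto_sub_zero (D : ExponentialDichotomy A X Xinv P α₁ α₂ β₁ β₂)
    (S : IsBoundedSolution C A h z) {ι : Type*} {l : Filter ι} {B : ι → ℤ → V →L[ℝ] V}
    {f w : ι → ℤ → V} {s : ι → ℤ} (S' : ∀ i, IsBoundedSolution C (B i) (f i) (w i))
    (hB : ∀ t, Tendsto (fun i => A (s i + t) - B i (s i + t)) l (𝓝 0))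
    (hf : ∀ t, Tendsto (fun i => h (s i + t) - f i (s i + t)) l (𝓝 0)) :
    Tendsto (fun i => z (s i) - w i (s i)) l (𝓝 0) := by
  simp only [fun i => D.sub_eq_green S (S' i)]
  refine D.tendsto_green_zero (fun i => S.norm_perturbation_le (S' i)) fun t => ?_
  have happly : Tendsto (fun i => (A (s i + t) - B i (s i + t)) (w i (s i + t))) l (𝓝 0) := by
    refine squeeze_zero_norm
      (fun i => ContinuousLinearMap.le_opNorm_of_le _ ((S' i).norm_le _)) ?_
    simpa only [norm_zero, zero_mul] using (hB t).norm.mul_const C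
  simpa only [add_zero] using happly.add (hf t)

theorem exists_translatesTo (D : ExponentialDichotomy A X Xinv P α₁ α₂ β₁ β₂)
    (S : IsBoundedSolution C A h z) (hA : TranslatesTo A k Abar) (hh : TranslatesTo h k hbar) :
    ∃ zbar, TranslatesTo z k zbar := by
  have hcauchy (t : ℤ) : CauchySeq fun n => z (t + k n) := by
    have hsub := D.tendsto_sub_zero S (l := atTop) (s := fun p : ℕ × ℕ => t + k p.1)
      (fun p => S.shift (k p.2 - k p.1))
      (fun r => by simpa only [add_right_comm t, add_add_sub_cancel] using hA.tendsto_sub (t + r))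
      (fun r => by simpa only [add_right_comm t, add_add_sub_cancel] using hh.tendsto_sub (t + r))
    rw [cauchySeq_iff_tendsto_dist_atTop_0]
    simpa only [add_add_sub_cancel, norm_zero, dist_eq_norm] using hsub.norm
  choose zbar hzbar using fun t => cauchySeq_tendsto_of_complete (hcauchy t)
  exact ⟨zbar, hzbar⟩

theorem translatesTo_neg (D : ExponentialDichotomy A X Xinv P α₁ α₂ β₁ β₂)
    (S : IsBoundedSolution C A h z) (Sbar : IsBoundedSolution C Abar hbar zbar)
    (hA : TranslatesTo Abar (-k) A) (hh : TranslatesTo hbar (-k) h) :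
    TranslatesTo zbar (-k) z := by
  intro t
  have hsub := D.tendsto_sub_zero S (l := atTop) (s := fun _ : ℕ => t)
    (fun n => Sbar.shift ((-k) n))
    (fun r => by simpa only [sub_self] using (hA (t + r)).const_sub (A (t + r)))
    (fun r => by simpa only [sub_self] using (hh (t + r)).const_sub (h (t + r)))
  simpa only [sub_sub_cancel, sub_zero] using hsub.const_sub (z t)

theorem discreteAlmostAutomorphic_of_bounded_solution
    (D : ExponentialDichotomy A X Xinv P α₁ α₂ β₁ β₂) (S : IsBoundedSolution C A h z)
    (hA : DiscreteAlmostAutomorphic A) (hh : DiscreteAlmostAutomorphic h) :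
    DiscreteAlmostAutomorphic z := by
  refine discreteAlmostAutomorphic_iff.2 fun k => ?_
  obtain ⟨σ, Abar, hbar, hσ, hAbar, hhbar⟩ := hA.exists_common_limit hh k
  obtain ⟨zbar, hzbar⟩ := D.exists_translatesTo S hAbar.forward hhbar.forward
  have Sbar := S.of_translatesTo hAbar.forward hhbar.forward hzbar
  exact ⟨σ, zbar, hσ, hzbar, D.translatesTo_neg S Sbar hAbar.backward hhbar.backward⟩

theorem discreteAlmostAutomorphic_green (D : ExponentialDichotomy A X Xinv P α₁ α₂ β₁ β₂)
    (hA : DiscreteAlmostAutomorphic A) (hh : DiscreteAlmostAutomorphic h) :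
    DiscreteAlmostAutomorphic (green X Xinv P h) := by
  obtain ⟨C₁, hC₁⟩ := hA.exists_norm_le
  obtain ⟨C₂, hC₂⟩ := hh.exists_norm_le
  have hC₃ := D.norm_green_le hC₂
  refine D.discreteAlmostAutomorphic_of_bounded_solution
    (C := max C₁ (max C₂ ((β₁ * (1 + α₁) / α₁ + β₂ / α₂) * C₂))) ?_ hA hh
  exact ⟨fun t => le_max_of_le_left (hC₁ t),
    fun t => le_max_of_le_right (le_max_of_le_left (hC₂ t)),
    fun t => le_max_of_le_right (le_max_of_le_right (hC₃ t)), D.green_add_one hC₂⟩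

end ExponentialDichotomy

end BoundedSolutions

section FixedPoint

variable {V : Type*} [NormedAddCommGroup V]

theorem isClosed_discreteAlmostAutomorphic_norm_le [CompleteSpace V] (M : ℝ) :
    IsClosed {x : ℤ →ᵇ V | DiscreteAlmostAutomorphic x ∧ ∀ t, ‖x t‖ ≤ M} := by
  refine IsSeqClosed.isClosed fun x y hx hxy => ?_
  have hunif := BoundedContinuousFunction.tendsto_iff_tendstoUniformly.1 hxy
  exact ⟨.of_tendstoUniformly (fun m => (hx m).1) hunif,
    fun t => le_of_tendsto' (hunif.tendsto_at t).norm fun m => (hx m).2 t⟩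

theorem exists_discreteAlmostAutomorphic_fixedPoint [CompleteSpace V] {T : (ℤ → V) → ℤ → V}
    {L : ℝ≥0} {M : ℝ} (hL : L < 1) (hM : 0 ≤ M)
    (hT : ∀ x, DiscreteAlmostAutomorphic x → DiscreteAlmostAutomorphic (T x))
    (hTM : ∀ x, DiscreteAlmostAutomorphic x → (∀ t, ‖x t‖ ≤ M) → ∀ t, ‖T x t‖ ≤ M)
    (hTL : ∀ x y, DiscreteAlmostAutomorphic x → DiscreteAlmostAutomorphic y →
      ∀ C, (∀ t, ‖x t - y t‖ ≤ C) → ∀ t, ‖T x t - T y t‖ ≤ L * C) :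
    ∃ x, DiscreteAlmostAutomorphic x ∧ (∀ t, ‖x t‖ ≤ M) ∧ T x = x := by
  let s : Set (ℤ →ᵇ V) := {x | DiscreteAlmostAutomorphic x ∧ ∀ t, ‖x t‖ ≤ M}
  have : CompleteSpace s := (isClosed_discreteAlmostAutomorphic_norm_le M).completeSpace_coe
  have : Nonempty s := ⟨0, .const 0, fun _ => norm_zero.trans_le hM⟩
  let F (x : s) : s :=
    ⟨.ofNormedAddCommGroupDiscrete (T x) M (hTM x x.2.1 x.2.2), hT x x.2.1, hTM x x.2.1 x.2.2⟩
  have hF : ContractingWith L F := by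
    refine ⟨hL, LipschitzWith.of_dist_le_mul fun x y => ?_⟩
    refine (BoundedContinuousFunction.dist_le (by positivity)).2 fun t => ?_
    rw [dist_eq_norm]
    exact hTL x y x.2.1 y.2.1 _ (fun r => (dist_eq_norm _ _).symm.trans_le
      (BoundedContinuousFunction.dist_coe_le_dist r)) t
  have hfixed : F hF.fixedPoint = hF.fixedPoint := hF.fixedPoint_isFixedPt
  refine ⟨hF.fixedPoint, hF.fixedPoint.2.1, hF.fixedPoint.2.2, ?_⟩
  exact congrArg (fun x : s => (x : ℤ → V)) hfixed

end FixedPoint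

section Lipschitz

variable {V : Type*} [NormedAddCommGroup V]

/-- The Lipschitz assumptions (A2) and (A3) on the data of the neutral system. -/
structure NeutralLipschitz (Q : ℤ → V → V) (G : ℤ → V → V → V) (E₁ E₂ : ℝ) : Prop where
  E₁_nonneg : 0 ≤ E₁
  E₂_nonneg : 0 ≤ E₂
  neutral : ∀ t u v, ‖Q t u - Q t v‖ ≤ E₁ * ‖u - v‖
  nonlinear : ∀ t u v w z, ‖G t u w - G t v z‖ ≤ E₂ * (‖u - v‖ + ‖w - z‖)

namespace NeutralLipschitz

variable {Q : ℤ → V → V} {G : ℤ → V → V → V} {E₁ E₂ a b M : ℝ}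

theorem lipschitzWith_neutral {K : ℝ≥0} (h : NeutralLipschitz Q G K E₂) (t : ℤ) :
    LipschitzWith K (Q t) :=
  LipschitzWith.of_dist_le_mul fun u v => by simpa only [dist_eq_norm] using h.neutral t u v

theorem lipschitzWith_nonlinear {K : ℝ≥0} (h : NeutralLipschitz Q G E₁ K) (t : ℤ) :
    LipschitzWith (K * 2) fun p : V × V => G t p.1 p.2 := by
  refine LipschitzWith.of_dist_le_mul fun p q => ?_
  rw [dist_eq_norm, dist_eq_norm, NNReal.coe_mul, NNReal.coe_ofNat, mul_assoc, two_mul]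
  refine (h.nonlinear t _ _ _ _).trans ?_
  gcongr
  exacts [norm_fst_le (p - q), norm_snd_le (p - q)]

theorem norm_neutral_le (h : NeutralLipschitz Q G E₁ E₂) (hb : ∀ t, ‖Q t 0‖ ≤ b) (t : ℤ) {u : V}
    (hu : ‖u‖ ≤ M) : ‖Q t u‖ ≤ E₁ * M + b := by
  have := h.E₁_nonneg
  have hsub : ‖Q t u - Q t 0‖ ≤ E₁ * M := (h.neutral t u 0).trans (by rw [sub_zero]; gcongr)
  simpa only [sub_add_cancel] using norm_add_le_of_le hsub (hb t)

theorem norm_nonlinear_le (h : NeutralLipschitz Q G E₁ E₂) (ha : ∀ t, ‖G t 0 0‖ ≤ a) (t : ℤ)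
    {u v : V} (hu : ‖u‖ ≤ M) (hv : ‖v‖ ≤ M) : ‖G t u v‖ ≤ 2 * E₂ * M + a := by
  have := h.E₂_nonneg
  have hsub : ‖G t u v - G t 0 0‖ ≤ E₂ * (M + M) :=
    (h.nonlinear t u 0 v 0).trans (by rw [sub_zero, sub_zero]; gcongr)
  rw [← two_mul, mul_left_comm, ← mul_assoc] at hsub
  simpa only [sub_add_cancel] using norm_add_le_of_le hsub (ha t)

end NeutralLipschitz

end Lipschitz

section Neutral

variable {V : Type*} [NormedAddCommGroup V] [NormedSpace ℝ V]

/-- The almost automorphy assumption (A1) on the data of the neutral system. -/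
structure NeutralAlmostAutomorphic (A : ℤ → V →L[ℝ] V) (g : ℤ → ℤ) (Q : ℤ → V → V)
    (G : ℤ → V → V → V) : Prop where
  linear : DiscreteAlmostAutomorphic A
  delay : DiscreteAlmostAutomorphic g
  neutral : ∀ u, DiscreteAlmostAutomorphic fun t => Q t u
  nonlinear : ∀ u v, DiscreteAlmostAutomorphic fun t => G t u v

/-- The forcing term `Λ` of the neutral system on a Banach space. -/
def neutralForcing (A : ℤ → V →L[ℝ] V) (g : ℤ → ℤ) (Q : ℤ → V → V) (G : ℤ → V → V → V)
    (x : ℤ → V) (j : ℤ) : V :=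
  (A j - 1) (Q j (x (j - g j))) + G j (x j) (x (j - g j))

/-- The map whose fixed points are the solutions sought: substituting `z = x - Q(·, x(· - g))` turns
the neutral system into `z (t + 1) = A t (z t) + Λ t`, to be solved by Green's operator. -/
noncomputable def neutralOperator (A X Xinv : ℤ → V →L[ℝ] V) (P : V →L[ℝ] V) (g : ℤ → ℤ)
    (Q : ℤ → V → V) (G : ℤ → V → V → V) (x : ℤ → V) (t : ℤ) : V :=
  Q t (x (t - g t)) + green X Xinv P (neutralForcing A g Q G x) t

variable {A X Xinv : ℤ → V →L[ℝ] V} {P : V →L[ℝ] V} {g : ℤ → ℤ} {Q : ℤ → V → V}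
  {G : ℤ → V → V → V} {x y : ℤ → V} {α₁ α₂ β₁ β₂ E₁ E₂ N C a b M : ℝ}

theorem norm_sub_one_apply_le (hN : ∀ t, ‖A t‖ ≤ N) {v : V} {c : ℝ} (hv : ‖v‖ ≤ c) (t : ℤ) :
    ‖(A t - 1) v‖ ≤ (N + 1) * c :=
  ContinuousLinearMap.le_of_opNorm_le_of_le _
    (norm_sub_le_of_le (hN t) ContinuousLinearMap.norm_id_le) hv

namespace NeutralLipschitz

theorem norm_neutralForcing_le (h : NeutralLipschitz Q G E₁ E₂) (hN : ∀ t, ‖A t‖ ≤ N)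
    (ha : ∀ t, ‖G t 0 0‖ ≤ a) (hb : ∀ t, ‖Q t 0‖ ≤ b) (hM : ∀ t, ‖x t‖ ≤ M) (j : ℤ) :
    ‖neutralForcing A g Q G x j‖ ≤ (N + 1) * (E₁ * M + b) + 2 * E₂ * M + a := by
  rw [add_assoc]
  exact norm_add_le_of_le (norm_sub_one_apply_le hN (h.norm_neutral_le hb j (hM _)) j)
    (h.norm_nonlinear_le ha j (hM _) (hM _))

theorem norm_neutralForcing_sub_le (h : NeutralLipschitz Q G E₁ E₂) (hN : ∀ t, ‖A t‖ ≤ N)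
    (hC : ∀ t, ‖x t - y t‖ ≤ C) (j : ℤ) :
    ‖neutralForcing A g Q G x j - neutralForcing A g Q G y j‖ ≤
      (N + 1) * (E₁ * C) + E₂ * (C + C) := by
  have := h.E₁_nonneg
  have := h.E₂_nonneg
  rw [neutralForcing, neutralForcing, add_sub_add_comm, ← map_sub]
  refine norm_add_le_of_le (norm_sub_one_apply_le hN ((h.neutral _ _ _).trans ?_) j)
    ((h.nonlinear _ _ _ _ _).trans ?_)
  · gcongr
    exact hC _
  · gcongr
    exacts [hC _, hC _]

end NeutralLipschitz

namespace NeutralAlmostAutomorphic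

theorem delayed_neutral (h : NeutralAlmostAutomorphic A g Q G) (hLip : NeutralLipschitz Q G E₁ E₂)
    (hx : DiscreteAlmostAutomorphic x) :
    DiscreteAlmostAutomorphic fun t => Q t (x (t - g t)) := by
  lift E₁ to ℝ≥0 using hLip.E₁_nonneg
  exact .apply_lipschitz hLip.lipschitzWith_neutral h.neutral (hx.delay h.delay)

theorem forcing (h : NeutralAlmostAutomorphic A g Q G) (hLip : NeutralLipschitz Q G E₁ E₂)
    (hx : DiscreteAlmostAutomorphic x) :
    DiscreteAlmostAutomorphic (neutralForcing A g Q G x) := by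
  have hlinear : DiscreteAlmostAutomorphic fun t => (A t - 1) (Q t (x (t - g t))) :=
    (h.linear.prodMk (h.delayed_neutral hLip hx)).continuous_comp
      (φ := fun p : (V →L[ℝ] V) × V => (p.1 - 1) p.2) (by fun_prop)
  lift E₂ to ℝ≥0 using hLip.E₂_nonneg
  have hnonlinear : DiscreteAlmostAutomorphic fun t => G t (x t) (x (t - g t)) :=
    .apply_lipschitz (F := fun t (p : V × V) => G t p.1 p.2) hLip.lipschitzWith_nonlinear
      (fun p => h.nonlinear p.1 p.2) (hx.prodMk (hx.delay h.delay))
  exact hlinear.add hnonlinear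

theorem operator [CompleteSpace V] (h : NeutralAlmostAutomorphic A g Q G)
    (hLip : NeutralLipschitz Q G E₁ E₂) (D : ExponentialDichotomy A X Xinv P α₁ α₂ β₁ β₂)
    (hx : DiscreteAlmostAutomorphic x) :
    DiscreteAlmostAutomorphic (neutralOperator A X Xinv P g Q G x) :=
  (h.delayed_neutral hLip hx).add
    (D.discreteAlmostAutomorphic_green h.linear (h.forcing hLip hx))

end NeutralAlmostAutomorphic

namespace ExponentialDichotomy

theorem norm_neutralOperator_le (D : ExponentialDichotomy A X Xinv P α₁ α₂ β₁ β₂)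
    (hLip : NeutralLipschitz Q G E₁ E₂) (hN : ∀ t, ‖A t‖ ≤ N) (ha : ∀ t, ‖G t 0 0‖ ≤ a)
    (hb : ∀ t, ‖Q t 0‖ ≤ b) (hM : ∀ t, ‖x t‖ ≤ M) (t : ℤ) :
    ‖neutralOperator A X Xinv P g Q G x t‖ ≤ E₁ * M + b +
      ((N + 1) * (E₁ * M + b) + 2 * E₂ * M + a) * (β₁ * (1 + α₁) / α₁ + β₂ / α₂) := by
  rw [mul_comm _ (_ + β₂ / α₂)]
  exact norm_add_le_of_le (hLip.norm_neutral_le hb t (hM _))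
    (D.norm_green_le (hLip.norm_neutralForcing_le hN ha hb hM) t)

theorem norm_neutralOperator_sub_le [CompleteSpace V]
    (D : ExponentialDichotomy A X Xinv P α₁ α₂ β₁ β₂) (hLip : NeutralLipschitz Q G E₁ E₂)
    (hAA : NeutralAlmostAutomorphic A g Q G) (hN : ∀ t, ‖A t‖ ≤ N)
    (hx : DiscreteAlmostAutomorphic x) (hy : DiscreteAlmostAutomorphic y)
    (hC : ∀ t, ‖x t - y t‖ ≤ C) (t : ℤ) :
    ‖neutralOperator A X Xinv P g Q G x t - neutralOperator A X Xinv P g Q G y t‖ ≤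
      (E₁ + ((N + 1) * E₁ + 2 * E₂) * (β₁ * (1 + α₁) / α₁ + β₂ / α₂)) * C := by
  obtain ⟨Cx, hCx⟩ := (hAA.forcing hLip hx).exists_norm_le
  obtain ⟨Cy, hCy⟩ := (hAA.forcing hLip hy).exists_norm_le
  have hE₁ := hLip.E₁_nonneg
  have hneutral : ‖Q t (x (t - g t)) - Q t (y (t - g t))‖ ≤ E₁ * C :=
    (hLip.neutral _ _ _).trans (by gcongr; exact hC _)
  have hgreen := D.norm_green_le (hLip.norm_neutralForcing_sub_le (g := g) hN hC) t
  rw [D.green_sub hCx hCy] at hgreen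
  rw [neutralOperator, neutralOperator, add_sub_add_comm]
  exact (norm_add_le_of_le hneutral hgreen).trans_eq (by ring)

end ExponentialDichotomy

theorem stmt_13_general [CompleteSpace V] (hAA : NeutralAlmostAutomorphic A g Q G)
    (hLip : NeutralLipschitz Q G E₁ E₂) (D : ExponentialDichotomy A X Xinv P α₁ α₂ β₁ β₂)
    (hM : 0 ≤ M)
    (hineq : E₁ * M + (⨆ t : ℤ, ‖Q t 0‖)
      + (((⨆ t : ℤ, ‖A t‖) + 1) * (E₁ * M + (⨆ t : ℤ, ‖Q t 0‖))
          + 2 * E₂ * M + (⨆ t : ℤ, ‖G t 0 0‖))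
        * (β₁ * (1 + α₁) / α₁ + β₂ / α₂) ≤ M) :
    ∃ x : ℤ → V, DiscreteAlmostAutomorphic x ∧ (∀ t, ‖x t‖ ≤ M) ∧
      neutralOperator A X Xinv P g Q G x = x := by
  have hN := hAA.linear.norm_le_iSup
  have hnorm {R : ℝ} {x : ℤ → V} (hx : ∀ t, ‖x t‖ ≤ R) :=
    D.norm_neutralOperator_le (g := g) hLip hN (hAA.nonlinear 0 0).norm_le_iSup
      (hAA.neutral 0).norm_le_iSup hx
  generalize (⨆ t : ℤ, ‖A t‖) = N at *
  generalize (⨆ t : ℤ, ‖Q t 0‖) = b at *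
  generalize (⨆ t : ℤ, ‖G t 0 0‖) = a at *
  obtain ⟨L, hL⟩ : ∃ L : ℝ≥0,
      L = E₁ + ((N + 1) * E₁ + 2 * E₂) * (β₁ * (1 + α₁) / α₁ + β₂ / α₂) := by
    have hN0 : 0 ≤ N := (norm_nonneg _).trans (hN 0)
    obtain ⟨-, -, -, -, hα₁, hα₂, hβ₁, hβ₂, -, -⟩ := D
    obtain ⟨hE₁, hE₂, -, -⟩ := hLip
    exact ⟨⟨_, by positivity⟩, rfl⟩
  by_cases hL1 : L < 1
  · refine exists_discreteAlmostAutomorphic_fixedPoint hL1 hM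
      (fun x hx => hAA.operator hLip D hx) (fun x _ hx t => (hnorm hx t).trans hineq)
      fun x y hx hy C hC => ?_
    rw [hL]
    exact D.norm_neutralOperator_sub_le hLip hAA hN hx hy hC
  -- If `1 ≤ L`, then `hineq` leaves no room for the value of the operator at `0`.
  · have hL1' : M ≤ L * M := le_mul_of_one_le_left hM (by exact_mod_cast not_lt.1 hL1)
    rw [hL] at hL1'
    refine ⟨fun _ => 0, .const 0, fun _ => norm_zero.trans_le hM, funext fun t => ?_⟩
    have hzero := hnorm (x := fun _ => 0) (fun _ => norm_zero.le) t
    exact norm_le_zero_iff.1 (hzero.trans (by linarith))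

end Neutral

/-- Under (A1)–(A4) with `E₁ ∈ (0,1)`, setting
`a = sup_t ‖G(t,0,0)‖`, `b = sup_t ‖Q(t,0)‖` and `‖A‖ = sup_t ‖A(t)‖`, if `M₀ > 0`
satisfies `E₁M₀ + b + [(‖A‖+1)(E₁M₀+b) + 2E₂M₀ + a]·[β₁(1+α₁)/α₁ + β₂/α₂] ≤ M₀`, then
the neutral system has a discrete almost automorphic solution `x` with
`sup_t ‖x(t)‖ ≤ M₀` satisfying the fixed point equation
`x(t) = Q(t, x(t−g(t))) + ∑_{j=-∞}^{t−1} X(t)P X(j+1)⁻¹ Λ(j,x)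
  − ∑_{j=t}^{∞} X(t)(I−P) X(j+1)⁻¹ Λ(j,x)`
(the sums being reindexed over `ℕ` via `j = t − 1 − m` and `j = t + m`). -/
theorem stmt_13 {n : ℕ}
    (A X Xinv : ℤ → (Fin n → ℝ) →L[ℝ] (Fin n → ℝ)) (t₀ : ℤ)
    (hAbdd : BddAbove (Set.range fun t : ℤ => ‖A t‖))
    (g : ℤ → ℤ) (hg0 : ∀ t : ℤ, 0 ≤ g t)
    (Q : ℤ → (Fin n → ℝ) → Fin n → ℝ)
    (G : ℤ → (Fin n → ℝ) → (Fin n → ℝ) → Fin n → ℝ)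
    (E₁ E₂ : ℝ) (hE₁ : 0 < E₁) (hE₁' : E₁ < 1) (hE₂ : 0 < E₂)
    -- (A1)
    (hA_aa : DiscreteAlmostAutomorphic A)
    (hg_aa : DiscreteAlmostAutomorphic g)
    (hQ_aa : ∀ u : Fin n → ℝ, DiscreteAlmostAutomorphic fun t => Q t u)
    (hG_aa : ∀ u v : Fin n → ℝ, DiscreteAlmostAutomorphic fun t => G t u v)
    -- (A2)
    (hQ_lip : ∀ (t : ℤ) (u v : Fin n → ℝ), ‖Q t u - Q t v‖ ≤ E₁ * ‖u - v‖)
    -- (A3)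
    (hG_lip : ∀ (t : ℤ) (u v w z : Fin n → ℝ),
      ‖G t u w - G t v z‖ ≤ E₂ * (‖u - v‖ + ‖w - z‖))
    -- (A4): exponential dichotomy
    (hX : ∀ t : ℤ, X (t + 1) = A t * X t) (hX0 : X t₀ = 1)
    (hXinv : ∀ t : ℤ, X t * Xinv t = 1) (hXinv' : ∀ t : ℤ, Xinv t * X t = 1)
    (P : (Fin n → ℝ) →L[ℝ] (Fin n → ℝ)) (hP : P * P = P)
    (α₁ α₂ β₁ β₂ : ℝ) (hα₁ : 0 < α₁) (hα₂ : 0 < α₂) (hβ₁ : 0 < β₁) (hβ₂ : 0 < β₂)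
    (hd₁ : ∀ s t : ℤ, s ≤ t → ‖X t * P * Xinv s‖ ≤ β₁ * (1 + α₁) ^ (s - t))
    (hd₂ : ∀ s t : ℤ, t ≤ s → ‖X t * (1 - P) * Xinv s‖ ≤ β₂ * (1 + α₂) ^ (t - s))
    (M₀ : ℝ) (hM₀ : 0 < M₀)
    (hineq : E₁ * M₀ + (⨆ t : ℤ, ‖Q t 0‖)
      + (((⨆ t : ℤ, ‖A t‖) + 1) * (E₁ * M₀ + (⨆ t : ℤ, ‖Q t 0‖))
          + 2 * E₂ * M₀ + (⨆ t : ℤ, ‖G t 0 0‖))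
        * (β₁ * (1 + α₁) / α₁ + β₂ / α₂) ≤ M₀) :
    ∃ x : ℤ → Fin n → ℝ, DiscreteAlmostAutomorphic x ∧ (∀ t : ℤ, ‖x t‖ ≤ M₀) ∧
      ∀ t : ℤ, x t = Q t (x (t - g t))
        + (∑' m : ℕ, (X t * P * Xinv (t - (m : ℤ))) (Lam A g Q G x (t - 1 - (m : ℤ))))
        - ∑' m : ℕ, (X t * (1 - P) * Xinv (t + (m : ℤ) + 1)) (Lam A g Q G x (t + (m : ℤ))) := by
  obtain ⟨x, hx, hxM, hfix⟩ := stmt_13_general ⟨hA_aa, hg_aa, hQ_aa, hG_aa⟩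
    ⟨hE₁.le, hE₂.le, hQ_lip, hG_lip⟩
    ⟨hX, hXinv, hXinv', hP, hα₁, hα₂, hβ₁, hβ₂, hd₁, hd₂⟩ hM₀.le hineq
  exact ⟨x, hx, hxM, fun t => (congrFun hfix t).symm.trans (add_sub_assoc _ _ _).symm⟩
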